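/- Let A, B, C be a maximal positive solution of the SL(2,ℝ) negative cross curvature flow ODE system with A_0, B_0, C_0 > 0, B_0 > C_0, F_1(0) < 0, F_2(0) < 0, and A_0 + C_0 ≤ B_0. Then the solution blows up at a finite time T > 0: as t → T^-, C(t)/(8 sqrt(T - t)) → 1 and there exists a positive constant E such that A(t) sqrt(T - t)/E → 1 and B(t) sqrt(T - t)/E → 1; in particular A, B → ∞ and C → 0 and lim_{t→T^-} A/B = 1. -/

import Mathlib

/-!
The region `A + C ≤ B` is forward invariant: on its boundary `F₁ = F₂ = -F₃ = -4AB`, which gives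
`(A + C - B)' = -64 / C`. Inside it `F₂ ≤ -4AB` and `F₃ ≥ 2AB`, so `A` and `AC` increase and
`(A⁻²)' ≤ -32 / (AC)²`; hence a solution with `AC` bounded is not global.

As long as `F₁ > 0`, the three functions are monotone and bounded by `B(0)`, so the solution can be
neither global nor maximal. Therefore `F₁ ≤ 0` at some time, and from then on, because only `A`
moves where `F₁ = 0`. Now `C` and `BC` decrease, so the lifespan `T` is finite, and `C → 0`, as
otherwise the solution would have a positive limit and could be continued by Picard–Lindelöf.

The monotone quantities `AC ≤ BC` have positive limits `L ≤ N`, so `A, B → ∞` and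
`A / B → r = L / N`. L'Hôpital's rule for `C² / A⁻² = (AC)²` reads
`L² = -L² F₁(r, 1, 0) / F₃(r, 1, 0)`, and `F₁ + F₃ = 2 (B - A - C)(A + B + C)`, so `r = 1`.
Finally `(C²)' = -4 F₁ F₂ / (AB)² → -64`, so `C ∼ 8 √(T - t)` by l'Hôpital's rule again, and
`A, B ∼ L / C`.
-/

/-- `F1 = -3A² + B² + C² - 2BC - 2AC - 2AB` for the `SL(2,ℝ)` cross curvature tensor. -/
def sl2F1 (A B C : ℝ) : ℝ :=
  -3 * A ^ 2 + B ^ 2 + C ^ 2 - 2 * B * C - 2 * A * C - 2 * A * B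

/-- `F2 = -3B² + A² + C² + 2BC + 2AC - 2AB` for the `SL(2,ℝ)` cross curvature tensor. -/
def sl2F2 (A B C : ℝ) : ℝ :=
  -3 * B ^ 2 + A ^ 2 + C ^ 2 + 2 * B * C + 2 * A * C - 2 * A * B

/-- `F3 = -3C² + A² + B² + 2BC - 2AC + 2AB` for the `SL(2,ℝ)` cross curvature tensor. -/
def sl2F3 (A B C : ℝ) : ℝ :=
  -3 * C ^ 2 + A ^ 2 + B ^ 2 + 2 * B * C - 2 * A * C + 2 * A * B

/-- A triple of functions solves the `SL(2,ℝ)` negative cross curvature flow ODE system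
(with positivity) on a set `s ⊆ ℝ`. -/
def IsSolSL2 (A B C : ℝ → ℝ) (s : Set ℝ) : Prop :=
  ∀ t ∈ s,
    (0 < A t ∧ 0 < B t ∧ 0 < C t) ∧
    HasDerivAt A
      (-2 * A t * sl2F2 (A t) (B t) (C t) * sl2F3 (A t) (B t) (C t) /
        (A t * B t * C t) ^ 2) t ∧
    HasDerivAt B
      (-2 * B t * sl2F3 (A t) (B t) (C t) * sl2F1 (A t) (B t) (C t) /
        (A t * B t * C t) ^ 2) t ∧
    HasDerivAt C
      (-2 * C t * sl2F1 (A t) (B t) (C t) * sl2F2 (A t) (B t) (C t) /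
        (A t * B t * C t) ^ 2) t

/-- A maximal solution of the `SL(2,ℝ)` system on `{t | 0 ≤ t, t < T}` (`T ∈ (0,∞]` an
extended real): a solution admitting no extension to a strictly larger interval. -/
def IsMaxSolSL2 (A B C : ℝ → ℝ) (T : EReal) : Prop :=
  IsSolSL2 A B C {t : ℝ | 0 ≤ t ∧ (t : EReal) < T} ∧
  ∀ (A' B' C' : ℝ → ℝ) (T' : EReal), T < T' →
    IsSolSL2 A' B' C' {t : ℝ | 0 ≤ t ∧ (t : EReal) < T'} →
    ¬ (∀ t : ℝ, 0 ≤ t → (t : EReal) < T → A' t = A t ∧ B' t = B t ∧ C' t = C t)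

open Filter Topology Set

/-! ### Calculus on intervals -/

section Calculus

variable {f f' : ℝ → ℝ} {s : Set ℝ} [s.OrdConnected]

lemma monotoneOn_of_hasDerivAt_nonneg (hf : ∀ t ∈ s, HasDerivAt f (f' t) t)
    (hf' : ∀ t ∈ s, 0 ≤ f' t) : MonotoneOn f s :=
  monotoneOn_of_hasDerivWithinAt_nonneg ‹s.OrdConnected›.convex
    (HasDerivAt.continuousOn hf)
    (fun t ht => (hf t (interior_subset ht)).hasDerivWithinAt)
    (fun t ht => hf' t (interior_subset ht))

lemma antitoneOn_of_hasDerivAt_nonpos (hf : ∀ t ∈ s, HasDerivAt f (f' t) t)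
    (hf' : ∀ t ∈ s, f' t ≤ 0) : AntitoneOn f s :=
  antitoneOn_of_hasDerivWithinAt_nonpos ‹s.OrdConnected›.convex
    (HasDerivAt.continuousOn hf)
    (fun t ht => (hf t (interior_subset ht)).hasDerivWithinAt)
    (fun t ht => hf' t (interior_subset ht))

lemma nonpos_of_hasDerivAt_neg_of_eq_zero {a : ℝ} (ha : IsLeast s a)
    (hf : ∀ t ∈ s, HasDerivAt f (f' t) t) (hfa : f a ≤ 0)
    (hf' : ∀ t ∈ s, f t = 0 → f' t < 0) {t : ℝ} (ht : t ∈ s) : f t ≤ 0 := by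
  have hsub : Icc a t ⊆ s := Set.Icc_subset s ha.1 ht
  exact image_le_of_deriv_right_lt_deriv_boundary
    (fun x hx => (hf x (hsub hx)).continuousAt.continuousWithinAt)
    (fun x hx => (hf x (hsub (Ico_subset_Icc_self hx))).hasDerivWithinAt)
    hfa (fun x => hasDerivAt_const x 0)
    (fun x hx => hf' x (hsub (Ico_subset_Icc_self hx))) ⟨ha.2 ht, le_rfl⟩

end Calculus

section MonotoneLimits

variable {α β : Type*} [LinearOrder α] [TopologicalSpace α] [OrderTopology α] [DenselyOrdered α]
  [ConditionallyCompleteLinearOrder β] [TopologicalSpace β] [OrderTopology β]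
  {f : α → β} {a b : α}

lemma exists_tendsto_nhdsLT_of_monotoneOn_Ico (hab : a < b) (hf : MonotoneOn f (Ico a b))
    (hbdd : BddAbove (f '' Ico a b)) :
    ∃ l, Tendsto f (𝓝[<] b) (𝓝 l) ∧ ∀ t ∈ Ico a b, f t ≤ l := by
  have hlim := (hf.mono Ioo_subset_Ico_self).tendsto_nhdsWithin_Ioo_left (nonempty_Ioo.2 hab)
    (hbdd.mono (image_mono Ioo_subset_Ico_self))
  have : (𝓝[<] b).NeBot := nhdsLT_neBot_of_exists_lt ⟨a, hab⟩
  refine ⟨_, hlim, fun t ht => ge_of_tendsto hlim ?_⟩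
  filter_upwards [Ioo_mem_nhdsLT ht.2] with x hx
  exact hf ht ⟨ht.1.trans hx.1.le, hx.2⟩ hx.1.le

lemma exists_tendsto_nhdsLT_of_antitoneOn_Ico (hab : a < b) (hf : AntitoneOn f (Ico a b))
    (hbdd : BddBelow (f '' Ico a b)) :
    ∃ l, Tendsto f (𝓝[<] b) (𝓝 l) ∧ ∀ t ∈ Ico a b, l ≤ f t :=
  exists_tendsto_nhdsLT_of_monotoneOn_Ico (β := βᵒᵈ) hab hf.dual_right hbdd

end MonotoneLimits

section Products

variable {α : Type*} {l : Filter α} {f g h : α → ℝ} {L N : ℝ}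

lemma tendsto_atTop_of_tendsto_mul_of_tendsto_nhdsGT_zero (hL : 0 < L)
    (hfh : Tendsto (fun t => f t * h t) l (𝓝 L)) (hh : Tendsto h l (𝓝[>] 0)) :
    Tendsto f l atTop := by
  refine (hfh.pos_mul_atTop hL (tendsto_inv_nhdsGT_zero.comp hh)).congr' ?_
  filter_upwards [hh self_mem_nhdsWithin] with t ht
  exact mul_inv_cancel_right₀ (ne_of_gt ht) _

lemma tendsto_div_of_tendsto_mul_right (hN : N ≠ 0) (hh : ∀ᶠ t in l, h t ≠ 0)
    (hfh : Tendsto (fun t => f t * h t) l (𝓝 L)) (hgh : Tendsto (fun t => g t * h t) l (𝓝 N)) :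
    Tendsto (fun t => f t / g t) l (𝓝 (L / N)) := by
  refine (hfh.div hgh hN).congr' ?_
  filter_upwards [hh] with t ht
  exact mul_div_mul_right _ _ ht

lemma tendsto_mul_of_tendsto_mul_of_tendsto_div (hN : N ≠ 0) (hg : ∀ᶠ t in l, g t ≠ 0)
    (hfg : Tendsto (fun t => f t * g t) l (𝓝 L)) (hgh : Tendsto (fun t => g t / h t) l (𝓝 N)) :
    Tendsto (fun t => f t * h t) l (𝓝 (L / N)) := by
  refine (hfg.div hgh hN).congr' ?_
  filter_upwards [hg] with t ht
  rw [Pi.div_apply, div_div_eq_mul_div, mul_right_comm, mul_div_cancel_right₀ _ ht]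

end Products

/-! ### Continuation of solutions of autonomous equations -/

section Continuation

variable {E : Type*} [NormedAddCommGroup E] [NormedSpace ℝ E]

lemma hasDerivAt_ite_of_tendsto {f g f' : ℝ → E} {S : ℝ} {e : E}
    (hf : ∀ᶠ t in 𝓝[<] S, HasDerivAt f (f' t) t) (hlim : Tendsto f (𝓝[<] S) (𝓝 (g S)))
    (hf' : Tendsto f' (𝓝[<] S) (𝓝 e)) (hg : HasDerivAt g e S) :
    HasDerivAt (fun t => if t < S then f t else g t) e S := by
  set h : ℝ → E := fun t => if t < S then f t else g t
  have hlt : ∀ t < S, h t = f t := fun t ht => if_pos ht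
  have hge : ∀ t, S ≤ t → h t = g t := fun t ht => if_neg ht.not_gt
  have hderiv : ∀ᶠ t in 𝓝[<] S, HasDerivAt h (f' t) t := by
    filter_upwards [hf, self_mem_nhdsWithin] with t ht htS
    exact ht.congr_of_eventuallyEq (eventually_of_mem (Iio_mem_nhds htS) hlt)
  have hcont : Tendsto h (𝓝[<] S) (𝓝 (h S)) := by
    rw [hge S le_rfl]
    exact hlim.congr' (eventually_of_mem self_mem_nhdsWithin fun t ht => (hlt t ht).symm)
  have hleft : HasDerivWithinAt h e (Iic S) S :=
    hasDerivWithinAt_Iic_of_tendsto_deriv (s := {t | HasDerivAt h (f' t) t ∧ t < S})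
      (fun t ht => ht.1.differentiableAt.differentiableWithinAt)
      (hcont.mono_left (nhdsWithin_mono _ fun _ ht => ht.2))
      (hderiv.and self_mem_nhdsWithin)
      (hf'.congr' (hderiv.mono fun t ht => ht.deriv.symm))
  have hright : HasDerivWithinAt h e (Ici S) S :=
    hg.hasDerivWithinAt.congr (fun t ht => hge t ht) (hge S le_rfl)
  simpa only [Iic_union_Ici, hasDerivWithinAt_univ] using hleft.union hright

lemma exists_continuation_of_tendsto [CompleteSpace E] {v : E → E} {γ : ℝ → E} {p : E} {U : Set E}
    {a S : ℝ} (hv : ContDiffAt ℝ 1 v p) (hU : U ∈ 𝓝 p) (haS : a < S)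
    (hγ : ∀ t ∈ Ico a S, HasDerivAt γ (v (γ t)) t) (hlim : Tendsto γ (𝓝[<] S) (𝓝 p)) :
    ∃ (δ : ℝ → E) (S' : ℝ), S < S' ∧ (∀ t < S, δ t = γ t) ∧ (∀ t ∈ Ico S S', δ t ∈ U) ∧
      ∀ t ∈ Ico a S', HasDerivAt δ (v (δ t)) t := by
  obtain ⟨η, hηS, ε, hε, hη⟩ :=
    hv.exists_forall_mem_closedBall_exists_eq_forall_mem_Ioo_hasDerivAt₀ S
  have hηS' : HasDerivAt η (v p) S := hηS ▸ hη S ⟨by linarith, by linarith⟩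
  obtain ⟨u, hSu, hu⟩ := mem_nhdsGE_iff_exists_Ico_subset.1
    (mem_nhdsWithin_of_mem_nhds (hηS'.continuousAt (by rwa [hηS])))
  set δ : ℝ → E := fun t => if t < S then γ t else η t
  have hlt : ∀ t < S, δ t = γ t := fun t ht => if_pos ht
  have hge : ∀ t, S ≤ t → δ t = η t := fun t ht => if_neg ht.not_gt
  refine ⟨δ, min u (S + ε), lt_min hSu (by linarith), hlt, fun t ht => ?_, fun t ht => ?_⟩
  · exact hge t ht.1 ▸ hu ⟨ht.1, ht.2.trans_le (min_le_left _ _)⟩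
  rcases lt_trichotomy t S with htS | rfl | hSt
  · rw [hlt t htS]
    exact (hγ t ⟨ht.1, htS⟩).congr_of_eventuallyEq (eventually_of_mem (Iio_mem_nhds htS) hlt)
  · rw [hge t le_rfl, hηS]
    refine hasDerivAt_ite_of_tendsto ?_ (by rwa [hηS]) (hv.continuousAt.tendsto.comp hlim) hηS'
    exact eventually_of_mem (Ico_mem_nhdsLT haS) hγ
  · rw [hge t hSt.le]
    exact (hη t ⟨by linarith, ht.2.trans_le (min_le_right _ _)⟩).congr_of_eventuallyEq
      (eventually_of_mem (Ioi_mem_nhds hSt) fun x hx => hge x (le_of_lt hx))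

end Continuation

/-- The right-hand side of the flow as a vector field on `ℝ × ℝ × ℝ`, to which the continuation
theorem for autonomous equations applies. -/
noncomputable def sl2Field (p : ℝ × ℝ × ℝ) : ℝ × ℝ × ℝ :=
  (-2 * p.1 * sl2F2 p.1 p.2.1 p.2.2 * sl2F3 p.1 p.2.1 p.2.2 / (p.1 * p.2.1 * p.2.2) ^ 2,
   -2 * p.2.1 * sl2F3 p.1 p.2.1 p.2.2 * sl2F1 p.1 p.2.1 p.2.2 / (p.1 * p.2.1 * p.2.2) ^ 2,
   -2 * p.2.2 * sl2F1 p.1 p.2.1 p.2.2 * sl2F2 p.1 p.2.1 p.2.2 / (p.1 * p.2.1 * p.2.2) ^ 2)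

lemma contDiffAt_sl2Field {n : WithTop ℕ∞} {p : ℝ × ℝ × ℝ} (hp : p.1 * p.2.1 * p.2.2 ≠ 0) :
    ContDiffAt ℝ n sl2Field p := by
  have hp' : (p.1 * p.2.1 * p.2.2) ^ 2 ≠ 0 := pow_ne_zero 2 hp
  unfold sl2Field sl2F1 sl2F2 sl2F3
  refine .prodMk (.div ?_ ?_ hp') (.prodMk (.div ?_ ?_ hp') (.div ?_ ?_ hp')) <;> fun_prop

/-! ### The polynomials `F₁`, `F₂`, `F₃` -/

section Polynomials

variable {a b c : ℝ}

lemma sl2F2_le (ha : 0 ≤ a) (hb : 0 ≤ b) (hc : 0 ≤ c) (h : a + c ≤ b) :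
    sl2F2 a b c ≤ -(4 * a * b) := by
  have hF2 : sl2F2 a b c = -(4 * a * b) - (b - (a + c)) * (a + c + 3 * b) := by
    unfold sl2F2; ring
  have hprod : 0 ≤ (b - (a + c)) * (a + c + 3 * b) := mul_nonneg (sub_nonneg.2 h) (by positivity)
  linarith

lemma le_sl2F3 (ha : 0 ≤ a) (hb : 0 ≤ b) (hc : 0 ≤ c) (h : a + c ≤ b) :
    2 * a * b ≤ sl2F3 a b c := by
  have hF3 : sl2F3 a b c = 2 * a * b + (b - (a + c)) * (b + a + 3 * c) + 2 * a * (a + c) := by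
    unfold sl2F3; ring
  have hprod : 0 ≤ (b - (a + c)) * (b + a + 3 * c) := mul_nonneg (sub_nonneg.2 h) (by positivity)
  have hsum : 0 ≤ 2 * a * (a + c) := by positivity
  linarith

lemma sl2F2_neg (ha : 0 < a) (hb : 0 < b) (hc : 0 ≤ c) (h : a + c ≤ b) : sl2F2 a b c < 0 :=
  (sl2F2_le ha.le hb.le hc h).trans_lt (neg_neg_of_pos (by positivity))

lemma sl2F3_pos (ha : 0 < a) (hb : 0 < b) (hc : 0 ≤ c) (h : a + c ≤ b) : 0 < sl2F3 a b c :=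
  lt_of_lt_of_le (by positivity) (le_sl2F3 ha.le hb.le hc h)

lemma sl2F1_add_sl2F3 (a b c : ℝ) :
    sl2F1 a b c + sl2F3 a b c = 2 * (b - a - c) * (a + b + c) := by
  unfold sl2F1 sl2F3; ring

lemma sl2F2_add_sl2F3 (a b c : ℝ) :
    sl2F2 a b c + sl2F3 a b c = -2 * (b - a - c) * (a + b - c) := by
  unfold sl2F2 sl2F3; ring

section Homogeneity

variable {α : Type*} {l : Filter α} {A B C : α → ℝ} {r q : ℝ}

lemma tendsto_div_sq_of_homogeneous {F : ℝ → ℝ → ℝ → ℝ}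
    (hF : ∀ k x y z, F (k * x) (k * y) (k * z) = k ^ 2 * F x y z)
    (hcont : Continuous fun p : ℝ × ℝ => F p.1 1 p.2) (hB : ∀ᶠ t in l, B t ≠ 0)
    (hA : Tendsto (fun t => A t / B t) l (𝓝 r)) (hC : Tendsto (fun t => C t / B t) l (𝓝 q)) :
    Tendsto (fun t => F (A t) (B t) (C t) / B t ^ 2) l (𝓝 (F r 1 q)) := by
  refine ((hcont.tendsto (r, q)).comp (hA.prodMk_nhds hC)).congr' ?_
  filter_upwards [hB] with t ht
  have hscale := hF (B t) (A t / B t) 1 (C t / B t)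
  rw [mul_div_cancel₀ _ ht, mul_one, mul_div_cancel₀ _ ht] at hscale
  rw [hscale, mul_div_cancel_left₀ _ (pow_ne_zero 2 ht), Function.comp_apply]

lemma tendsto_sl2F1_div_sq (hB : ∀ᶠ t in l, B t ≠ 0)
    (hA : Tendsto (fun t => A t / B t) l (𝓝 r)) (hC : Tendsto (fun t => C t / B t) l (𝓝 q)) :
    Tendsto (fun t => sl2F1 (A t) (B t) (C t) / B t ^ 2) l (𝓝 (sl2F1 r 1 q)) :=
  tendsto_div_sq_of_homogeneous (fun k x y z => by unfold sl2F1; ring)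
    (by unfold sl2F1; fun_prop) hB hA hC

lemma tendsto_sl2F2_div_sq (hB : ∀ᶠ t in l, B t ≠ 0)
    (hA : Tendsto (fun t => A t / B t) l (𝓝 r)) (hC : Tendsto (fun t => C t / B t) l (𝓝 q)) :
    Tendsto (fun t => sl2F2 (A t) (B t) (C t) / B t ^ 2) l (𝓝 (sl2F2 r 1 q)) :=
  tendsto_div_sq_of_homogeneous (fun k x y z => by unfold sl2F2; ring)
    (by unfold sl2F2; fun_prop) hB hA hC

lemma tendsto_sl2F3_div_sq (hB : ∀ᶠ t in l, B t ≠ 0)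
    (hA : Tendsto (fun t => A t / B t) l (𝓝 r)) (hC : Tendsto (fun t => C t / B t) l (𝓝 q)) :
    Tendsto (fun t => sl2F3 (A t) (B t) (C t) / B t ^ 2) l (𝓝 (sl2F3 r 1 q)) :=
  tendsto_div_sq_of_homogeneous (fun k x y z => by unfold sl2F3; ring)
    (by unfold sl2F3; fun_prop) hB hA hC

end Homogeneity

end Polynomials

/-! ### Invariant regions and monotone quantities -/

/-- A solution on `s` that stays in the region `A + C ≤ B`, `F₁ ≤ 0`, which is forward invariant
and in which the blow-up takes place. -/
structure IsTrappedSL2 (A B C : ℝ → ℝ) (s : Set ℝ) : Prop where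
  isSol : IsSolSL2 A B C s
  add_le : ∀ t ∈ s, A t + C t ≤ B t
  sl2F1_nonpos : ∀ t ∈ s, sl2F1 (A t) (B t) (C t) ≤ 0

variable {A B C : ℝ → ℝ} {s : Set ℝ} {a t : ℝ}

namespace IsSolSL2

lemma mono {s' : Set ℝ} (h : IsSolSL2 A B C s) (hs : s' ⊆ s) : IsSolSL2 A B C s' :=
  fun t ht => h t (hs ht)

lemma pos_A (h : IsSolSL2 A B C s) (ht : t ∈ s) : 0 < A t := (h t ht).1.1

lemma pos_B (h : IsSolSL2 A B C s) (ht : t ∈ s) : 0 < B t := (h t ht).1.2.1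

lemma pos_C (h : IsSolSL2 A B C s) (ht : t ∈ s) : 0 < C t := (h t ht).1.2.2

lemma hasDerivAt_A (h : IsSolSL2 A B C s) (ht : t ∈ s) :
    HasDerivAt A (-2 * A t * sl2F2 (A t) (B t) (C t) * sl2F3 (A t) (B t) (C t) /
      (A t * B t * C t) ^ 2) t := (h t ht).2.1

lemma hasDerivAt_B (h : IsSolSL2 A B C s) (ht : t ∈ s) :
    HasDerivAt B (-2 * B t * sl2F3 (A t) (B t) (C t) * sl2F1 (A t) (B t) (C t) /
      (A t * B t * C t) ^ 2) t := (h t ht).2.2.1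

lemma hasDerivAt_C (h : IsSolSL2 A B C s) (ht : t ∈ s) :
    HasDerivAt C (-2 * C t * sl2F1 (A t) (B t) (C t) * sl2F2 (A t) (B t) (C t) /
      (A t * B t * C t) ^ 2) t := (h t ht).2.2.2

lemma hasDerivAt_inv_sq_A (h : IsSolSL2 A B C s) (ht : t ∈ s) :
    HasDerivAt (fun t => (A t ^ 2)⁻¹)
      (4 * sl2F2 (A t) (B t) (C t) * sl2F3 (A t) (B t) (C t) /
        (A t * (A t * B t * C t)) ^ 2) t := by
  have hA := h.pos_A ht
  have hB := h.pos_B ht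
  have hC := h.pos_C ht
  refine (((h.hasDerivAt_A ht).pow 2).inv (pow_ne_zero 2 hA.ne')).congr_deriv ?_
  simp only [Pi.pow_apply]
  field_simp
  ring

lemma hasDerivAt_sq_C (h : IsSolSL2 A B C s) (ht : t ∈ s) :
    HasDerivAt (fun t => C t ^ 2)
      (-4 * sl2F1 (A t) (B t) (C t) * sl2F2 (A t) (B t) (C t) / (A t * B t) ^ 2) t := by
  have hA := h.pos_A ht
  have hB := h.pos_B ht
  have hC := h.pos_C ht
  refine ((h.hasDerivAt_C ht).pow 2).congr_deriv ?_
  field_simp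
  ring

lemma sl2F2_neg (h : IsSolSL2 A B C s) (ht : t ∈ s) (hw : A t + C t ≤ B t) :
    sl2F2 (A t) (B t) (C t) < 0 :=
  _root_.sl2F2_neg (h.pos_A ht) (h.pos_B ht) (h.pos_C ht).le hw

lemma sl2F3_pos (h : IsSolSL2 A B C s) (ht : t ∈ s) (hw : A t + C t ≤ B t) :
    0 < sl2F3 (A t) (B t) (C t) :=
  _root_.sl2F3_pos (h.pos_A ht) (h.pos_B ht) (h.pos_C ht).le hw

lemma deriv_inv_sq_A_le (h : IsSolSL2 A B C s) (ht : t ∈ s) (hw : A t + C t ≤ B t) :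
    deriv (fun t => (A t ^ 2)⁻¹) t ≤ -(32 / (A t * C t) ^ 2) := by
  have hA := h.pos_A ht
  have hB := h.pos_B ht
  have hC := h.pos_C ht
  have hF2 : 4 * A t * B t ≤ -sl2F2 (A t) (B t) (C t) := by
    linarith [sl2F2_le hA.le hB.le hC.le hw]
  have hF3 := le_sl2F3 hA.le hB.le hC.le hw
  rw [(h.hasDerivAt_inv_sq_A ht).deriv, le_neg]
  calc 32 / (A t * C t) ^ 2
      = 4 * (4 * A t * B t) * (2 * A t * B t) / (A t * (A t * B t * C t)) ^ 2 := by
        field_simp; ring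
    _ ≤ 4 * -sl2F2 (A t) (B t) (C t) * sl2F3 (A t) (B t) (C t) /
          (A t * (A t * B t * C t)) ^ 2 := by
        gcongr
        exact mul_nonneg zero_le_four (hF2.trans' (by positivity))
    _ = _ := by ring

variable [s.OrdConnected]

lemma add_le (h : IsSolSL2 A B C s) (ha : IsLeast s a) (hwa : A a + C a ≤ B a) (ht : t ∈ s) :
    A t + C t ≤ B t := by
  rw [← sub_nonpos]
  refine nonpos_of_hasDerivAt_neg_of_eq_zero (f := fun t => A t + C t - B t) ha
    (fun t ht => ((h.hasDerivAt_A ht).add (h.hasDerivAt_C ht)).sub (h.hasDerivAt_B ht))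
    (sub_nonpos.2 hwa) (fun t ht hzero => ?_) ht
  have hA := h.pos_A ht
  have hC := h.pos_C ht
  have hB : B t = A t + C t := (sub_eq_zero.1 hzero).symm
  calc _ = -64 / C t := by
        rw [hB]
        unfold sl2F1 sl2F2 sl2F3
        field_simp
        ring
    _ < 0 := div_neg_of_neg_of_pos (by norm_num) hC

lemma sl2F1_nonpos (h : IsSolSL2 A B C s) (hw : ∀ t ∈ s, A t + C t ≤ B t) (ha : IsLeast s a)
    (hFa : sl2F1 (A a) (B a) (C a) ≤ 0) (ht : t ∈ s) : sl2F1 (A t) (B t) (C t) ≤ 0 := by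
  refine nonpos_of_hasDerivAt_neg_of_eq_zero (f := fun t => sl2F1 (A t) (B t) (C t)) ha
    (fun t ht =>
      (((((((h.hasDerivAt_A ht).pow 2).const_mul (-3)).add ((h.hasDerivAt_B ht).pow 2)).add
        ((h.hasDerivAt_C ht).pow 2)).sub
        (((h.hasDerivAt_B ht).const_mul 2).mul (h.hasDerivAt_C ht))).sub
        (((h.hasDerivAt_A ht).const_mul 2).mul (h.hasDerivAt_C ht))).sub
        (((h.hasDerivAt_A ht).const_mul 2).mul (h.hasDerivAt_B ht)))
    hFa (fun t ht hzero => ?_) ht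
  have hA := h.pos_A ht
  have hB := h.pos_B ht
  have hC := h.pos_C ht
  have hF23 := mul_neg_of_neg_of_pos (h.sl2F2_neg ht (hw t ht)) (h.sl2F3_pos ht (hw t ht))
  calc _ = 4 * A t * (3 * A t + B t + C t) / (A t * B t * C t) ^ 2 *
        (sl2F2 (A t) (B t) (C t) * sl2F3 (A t) (B t) (C t)) := by
        simp only [hzero]
        ring
    _ < 0 := mul_neg_of_pos_of_neg (by positivity) hF23

lemma isTrappedSL2 (h : IsSolSL2 A B C s) (ha : IsLeast s a) (hwa : A a + C a ≤ B a)
    (hFa : sl2F1 (A a) (B a) (C a) ≤ 0) : IsTrappedSL2 A B C s where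
  isSol := h
  add_le _ ht := h.add_le ha hwa ht
  sl2F1_nonpos _ ht := h.sl2F1_nonpos (fun _ ht => h.add_le ha hwa ht) ha hFa ht

lemma monotoneOn_A (h : IsSolSL2 A B C s) (hw : ∀ t ∈ s, A t + C t ≤ B t) : MonotoneOn A s := by
  refine monotoneOn_of_hasDerivAt_nonneg (fun t ht => h.hasDerivAt_A ht) fun t ht => ?_
  have hA : -2 * A t ≤ 0 := by linarith [h.pos_A ht]
  exact div_nonneg (mul_nonneg (mul_nonneg_of_nonpos_of_nonpos hA (h.sl2F2_neg ht (hw t ht)).le)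
    (h.sl2F3_pos ht (hw t ht)).le) (sq_nonneg _)

lemma antitoneOn_B (h : IsSolSL2 A B C s) (hw : ∀ t ∈ s, A t + C t ≤ B t)
    (hF : ∀ t ∈ s, 0 ≤ sl2F1 (A t) (B t) (C t)) : AntitoneOn B s := by
  refine antitoneOn_of_hasDerivAt_nonpos (fun t ht => h.hasDerivAt_B ht) fun t ht => ?_
  have hB : -2 * B t ≤ 0 := by linarith [h.pos_B ht]
  exact div_nonpos_of_nonpos_of_nonneg (mul_nonpos_of_nonpos_of_nonneg
    (mul_nonpos_of_nonpos_of_nonneg hB (h.sl2F3_pos ht (hw t ht)).le) (hF t ht)) (sq_nonneg _)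

lemma monotoneOn_C (h : IsSolSL2 A B C s) (hw : ∀ t ∈ s, A t + C t ≤ B t)
    (hF : ∀ t ∈ s, 0 ≤ sl2F1 (A t) (B t) (C t)) : MonotoneOn C s := by
  refine monotoneOn_of_hasDerivAt_nonneg (fun t ht => h.hasDerivAt_C ht) fun t ht => ?_
  have hC : -2 * C t ≤ 0 := by linarith [h.pos_C ht]
  exact div_nonneg (mul_nonneg_of_nonpos_of_nonpos
    (mul_nonpos_of_nonpos_of_nonneg hC (hF t ht)) (h.sl2F2_neg ht (hw t ht)).le) (sq_nonneg _)

lemma monotoneOn_mul_A_C (h : IsSolSL2 A B C s) (hw : ∀ t ∈ s, A t + C t ≤ B t) :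
    MonotoneOn (fun t => A t * C t) s := by
  refine monotoneOn_of_hasDerivAt_nonneg
    (fun t ht => (h.hasDerivAt_A ht).mul (h.hasDerivAt_C ht)) fun t ht => ?_
  have hA := h.pos_A ht
  have hB := h.pos_B ht
  have hC := h.pos_C ht
  have hF13 : 0 ≤ sl2F1 (A t) (B t) (C t) + sl2F3 (A t) (B t) (C t) := by
    rw [sl2F1_add_sl2F3]
    exact mul_nonneg (by linarith [hw t ht]) (by positivity)
  calc 0 ≤ 2 * (A t * C t) / (A t * B t * C t) ^ 2 * (-sl2F2 (A t) (B t) (C t) *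
        (sl2F1 (A t) (B t) (C t) + sl2F3 (A t) (B t) (C t))) :=
        mul_nonneg (by positivity) (mul_nonneg (neg_nonneg.2 (h.sl2F2_neg ht (hw t ht)).le) hF13)
    _ = _ := by ring

lemma not_bddAbove_mul_A_C (h : IsSolSL2 A B C (Ici a)) (hw : ∀ t ∈ Ici a, A t + C t ≤ B t) :
    ¬ BddAbove ((fun t => A t * C t) '' Ici a) := by
  rintro ⟨K, hK⟩
  have hAC : ∀ t ∈ Ici a, A t * C t ≤ K := fun t ht => hK (mem_image_of_mem _ ht)
  have haa : a ∈ Ici a := self_mem_Ici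
  have hAa := h.pos_A haa
  have hKpos : 0 < K := (mul_pos hAa (h.pos_C haa)).trans_le (hAC a haa)
  have hanti : AntitoneOn (fun t => (A t ^ 2)⁻¹ + 32 / K ^ 2 * t) (Ici a) := by
    refine antitoneOn_of_hasDerivAt_nonpos (fun t ht =>
      (h.hasDerivAt_inv_sq_A ht).differentiableAt.hasDerivAt.add
        ((hasDerivAt_id t).const_mul _)) fun t ht => ?_
    have hA := h.pos_A ht
    have hC := h.pos_C ht
    have hrate := h.deriv_inv_sq_A_le ht (hw t ht)
    have hK : 32 / K ^ 2 ≤ 32 / (A t * C t) ^ 2 := by gcongr; exact hAC t ht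
    linarith
  have hmem : a + K ^ 2 / (32 * A a ^ 2) ∈ Ici a :=
    mem_Ici.2 (le_add_of_nonneg_right (by positivity))
  have hle := hanti haa hmem hmem
  have hpos : 0 < (A (a + K ^ 2 / (32 * A a ^ 2)) ^ 2)⁻¹ :=
    inv_pos.2 (pow_pos (h.pos_A hmem) 2)
  have htime : 32 / K ^ 2 * (a + K ^ 2 / (32 * A a ^ 2)) = 32 / K ^ 2 * a + (A a ^ 2)⁻¹ := by
    field_simp
  linarith

end IsSolSL2

namespace IsTrappedSL2

variable [s.OrdConnected]

lemma monotoneOn_B (h : IsTrappedSL2 A B C s) : MonotoneOn B s := by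
  refine monotoneOn_of_hasDerivAt_nonneg (fun t ht => h.isSol.hasDerivAt_B ht) fun t ht => ?_
  have hB : -2 * B t ≤ 0 := by linarith [h.isSol.pos_B ht]
  have hF3 := h.isSol.sl2F3_pos ht (h.add_le t ht)
  exact div_nonneg (mul_nonneg_of_nonpos_of_nonpos
    (mul_nonpos_of_nonpos_of_nonneg hB hF3.le) (h.sl2F1_nonpos t ht)) (sq_nonneg _)

lemma antitoneOn_C (h : IsTrappedSL2 A B C s) : AntitoneOn C s := by
  refine antitoneOn_of_hasDerivAt_nonpos (fun t ht => h.isSol.hasDerivAt_C ht) fun t ht => ?_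
  have hC : -2 * C t ≤ 0 := by linarith [h.isSol.pos_C ht]
  have hF2 := h.isSol.sl2F2_neg ht (h.add_le t ht)
  exact div_nonpos_of_nonpos_of_nonneg (mul_nonpos_of_nonneg_of_nonpos
    (mul_nonneg_of_nonpos_of_nonpos hC (h.sl2F1_nonpos t ht)) hF2.le) (sq_nonneg _)

lemma antitoneOn_mul_B_C (h : IsTrappedSL2 A B C s) : AntitoneOn (fun t => B t * C t) s := by
  refine antitoneOn_of_hasDerivAt_nonpos
    (fun t ht => (h.isSol.hasDerivAt_B ht).mul (h.isSol.hasDerivAt_C ht)) fun t ht => ?_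
  have hA := h.isSol.pos_A ht
  have hB := h.isSol.pos_B ht
  have hC := h.isSol.pos_C ht
  have hw := h.add_le t ht
  have hF23 : sl2F2 (A t) (B t) (C t) + sl2F3 (A t) (B t) (C t) ≤ 0 := by
    rw [sl2F2_add_sl2F3]
    exact mul_nonpos_of_nonpos_of_nonneg (by linarith) (by linarith)
  calc _ = -2 * (B t * C t) / (A t * B t * C t) ^ 2 * (sl2F1 (A t) (B t) (C t) *
        (sl2F2 (A t) (B t) (C t) + sl2F3 (A t) (B t) (C t))) := by ring
    _ ≤ 0 := mul_nonpos_of_nonpos_of_nonneg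
        (div_nonpos_of_nonpos_of_nonneg (by linarith [mul_pos hB hC]) (sq_nonneg _))
        (mul_nonneg_of_nonpos_of_nonpos (h.sl2F1_nonpos t ht) hF23)

lemma mul_A_C_le (h : IsTrappedSL2 A B C s) (ha : IsLeast s a) (ht : t ∈ s) :
    A t * C t ≤ B a * C a := by
  have hC := h.isSol.pos_C ht
  calc A t * C t ≤ B t * C t := by gcongr; linarith [h.add_le t ht]
    _ ≤ B a * C a := h.antitoneOn_mul_B_C ha.1 ht (ha.2 ht)

end IsTrappedSL2

/-! ### Finite lifespan and collapse of `C` -/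

lemma not_isSolSL2_Ici (hw0 : A 0 + C 0 ≤ B 0) : ¬ IsSolSL2 A B C (Ici 0) := by
  intro h
  have hw : ∀ t ∈ Ici 0, A t + C t ≤ B t := fun t ht => h.add_le isLeast_Ici hw0 ht
  by_cases hF : ∃ a ∈ Ici (0 : ℝ), sl2F1 (A a) (B a) (C a) ≤ 0
  · obtain ⟨a, ha, hFa⟩ := hF
    have hsub : Ici a ⊆ Ici 0 := Ici_subset_Ici.2 ha
    have htrap := (h.mono hsub).isTrappedSL2 isLeast_Ici (hw a ha) hFa
    refine htrap.isSol.not_bddAbove_mul_A_C htrap.add_le ⟨B a * C a, ?_⟩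
    exact forall_mem_image.2 fun t ht => htrap.mul_A_C_le isLeast_Ici ht
  · push Not at hF
    refine h.not_bddAbove_mul_A_C hw ⟨B 0 * B 0, forall_mem_image.2 fun t ht => ?_⟩
    have hBt : B t ≤ B 0 := h.antitoneOn_B hw (fun t ht => (hF t ht).le) self_mem_Ici ht ht
    have hA := h.pos_A ht
    have hC := h.pos_C ht
    exact mul_le_mul (by linarith [hw t ht]) (by linarith [hw t ht]) hC.le (by linarith [hw t ht])

namespace IsMaxSolSL2

lemma isSolSL2_Ico {T : ℝ} (h : IsMaxSolSL2 A B C T) : IsSolSL2 A B C (Ico 0 T) :=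
  h.1.mono fun _ ht => ⟨ht.1, EReal.coe_lt_coe_iff.2 ht.2⟩

lemma exists_eq_coe {T : EReal} (hT : 0 < T) (h : IsMaxSolSL2 A B C T) (hw0 : A 0 + C 0 ≤ B 0) :
    ∃ T₀ : ℝ, 0 < T₀ ∧ T = T₀ := by
  induction T using EReal.rec with
  | bot => exact absurd hT not_lt_bot
  | top => exact absurd (h.1.mono fun t ht => ⟨ht, EReal.coe_lt_top t⟩) (not_isSolSL2_Ici hw0)
  | coe T₀ => exact ⟨T₀, EReal.coe_pos.1 hT, rfl⟩

variable {T : ℝ}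

lemma not_tendsto_of_pos (h : IsMaxSolSL2 A B C T) (hT : 0 < T) {a b c : ℝ} (ha : 0 < a)
    (hb : 0 < b) (hc : 0 < c) (hA : Tendsto A (𝓝[<] T) (𝓝 a)) (hB : Tendsto B (𝓝[<] T) (𝓝 b)) :
    ¬ Tendsto C (𝓝[<] T) (𝓝 c) := by
  intro hC
  have hsol := h.isSolSL2_Ico
  have hfield : ContDiffAt ℝ 1 sl2Field (a, b, c) :=
    contDiffAt_sl2Field (mul_pos (mul_pos ha hb) hc).ne'
  have hpos : Ioi 0 ×ˢ Ioi 0 ×ˢ Ioi 0 ∈ 𝓝 (a, b, c) :=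
    prod_mem_nhds (Ioi_mem_nhds ha) (prod_mem_nhds (Ioi_mem_nhds hb) (Ioi_mem_nhds hc))
  obtain ⟨δ, T', hTT', hδ, hδpos, hδderiv⟩ := exists_continuation_of_tendsto hfield hpos hT
    (γ := fun t => (A t, B t, C t))
    (fun t ht => (hsol.hasDerivAt_A ht).prodMk ((hsol.hasDerivAt_B ht).prodMk
      (hsol.hasDerivAt_C ht)))
    (hA.prodMk_nhds (hB.prodMk_nhds hC))
  refine h.2 (fun t => (δ t).1) (fun t => (δ t).2.1) (fun t => (δ t).2.2) T'
    (EReal.coe_lt_coe_iff.2 hTT') ?_ ?_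
  · rintro t ⟨ht0, htT'⟩
    have htT' : t < T' := EReal.coe_lt_coe_iff.1 htT'
    have hderiv := hδderiv t ⟨ht0, htT'⟩
    refine ⟨?_, hderiv.fst, hderiv.snd.fst, hderiv.snd.snd⟩
    rcases lt_or_ge t T with htT | hTt
    · simpa only [hδ t htT] using (hsol t ⟨ht0, htT⟩).1
    · exact hδpos t ⟨hTt, htT'⟩
  · intro t _ htT
    simp only [hδ t (EReal.coe_lt_coe_iff.1 htT), and_self]

lemma exists_isTrappedSL2 (h : IsMaxSolSL2 A B C T) (hT : 0 < T) (hw0 : A 0 + C 0 ≤ B 0) :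
    ∃ a < T, 0 ≤ a ∧ IsTrappedSL2 A B C (Ico a T) := by
  have hsol := h.isSolSL2_Ico
  have hw : ∀ t ∈ Ico 0 T, A t + C t ≤ B t := fun t ht => hsol.add_le (isLeast_Ico hT) hw0 ht
  suffices hF : ∃ a ∈ Ico 0 T, sl2F1 (A a) (B a) (C a) ≤ 0 by
    obtain ⟨a, ha, hFa⟩ := hF
    exact ⟨a, ha.2, ha.1, (hsol.mono (Ico_subset_Ico_left ha.1)).isTrappedSL2
      (isLeast_Ico ha.2) (hw a ha) hFa⟩
  by_contra! hF
  have h0 : (0 : ℝ) ∈ Ico 0 T := left_mem_Ico.2 hT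
  have hBanti : AntitoneOn B (Ico 0 T) := hsol.antitoneOn_B hw fun t ht => (hF t ht).le
  have hBle : ∀ t ∈ Ico 0 T, B t ≤ B 0 := fun t ht => hBanti h0 ht ht.1
  have hAmono := hsol.monotoneOn_A hw
  have hAle : ∀ t ∈ Ico 0 T, A 0 ≤ B t := fun t ht => by
    linarith [hAmono h0 ht ht.1, hw t ht, hsol.pos_C ht]
  obtain ⟨a, hA, hAa⟩ := exists_tendsto_nhdsLT_of_monotoneOn_Ico hT hAmono
    ⟨B 0, forall_mem_image.2 fun t ht => by linarith [hw t ht, hBle t ht, hsol.pos_C ht]⟩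
  obtain ⟨c, hC, hCc⟩ := exists_tendsto_nhdsLT_of_monotoneOn_Ico hT
    (hsol.monotoneOn_C hw fun t ht => (hF t ht).le)
    ⟨B 0, forall_mem_image.2 fun t ht => by linarith [hw t ht, hBle t ht, hsol.pos_A ht]⟩
  obtain ⟨b, hB, -⟩ := exists_tendsto_nhdsLT_of_antitoneOn_Ico hT hBanti
    ⟨A 0, forall_mem_image.2 hAle⟩
  have hb : A 0 ≤ b := ge_of_tendsto hB (eventually_of_mem (Ico_mem_nhdsLT hT) hAle)
  exact h.not_tendsto_of_pos hT ((hsol.pos_A h0).trans_le (hAa 0 h0))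
    ((hsol.pos_A h0).trans_le hb) ((hsol.pos_C h0).trans_le (hCc 0 h0)) hA hB hC

lemma tendsto_C_zero (h : IsMaxSolSL2 A B C T) (ha0 : 0 ≤ a) (haT : a < T)
    (htrap : IsTrappedSL2 A B C (Ico a T)) : Tendsto C (𝓝[<] T) (𝓝 0) := by
  have hsol := htrap.isSol
  have haa : a ∈ Ico a T := left_mem_Ico.2 haT
  obtain ⟨c, hC, hcC⟩ := exists_tendsto_nhdsLT_of_antitoneOn_Ico haT htrap.antitoneOn_C
    ⟨0, forall_mem_image.2 fun t ht => (hsol.pos_C ht).le⟩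
  have hc : 0 ≤ c := ge_of_tendsto hC
    (eventually_of_mem (Ico_mem_nhdsLT haT) fun t ht => (hsol.pos_C ht).le)
  rcases hc.eq_or_lt with rfl | hcpos
  · exact hC
  have hBle : ∀ t ∈ Ico a T, B t ≤ B a * C a / c := fun t ht => by
    rw [le_div_iff₀ hcpos]
    calc B t * c ≤ B t * C t := mul_le_mul_of_nonneg_left (hcC t ht) (hsol.pos_B ht).le
      _ ≤ B a * C a := htrap.antitoneOn_mul_B_C haa ht ht.1
  obtain ⟨a', hA, haa'⟩ := exists_tendsto_nhdsLT_of_monotoneOn_Ico haT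
    (hsol.monotoneOn_A htrap.add_le) ⟨B a * C a / c, forall_mem_image.2 fun t ht => by
      linarith [htrap.add_le t ht, hBle t ht, hsol.pos_C ht]⟩
  obtain ⟨b', hB, hbb'⟩ := exists_tendsto_nhdsLT_of_monotoneOn_Ico haT htrap.monotoneOn_B
    ⟨B a * C a / c, forall_mem_image.2 hBle⟩
  exact absurd hC (h.not_tendsto_of_pos (ha0.trans_lt haT) ((hsol.pos_A haa).trans_le (haa' a haa))
    ((hsol.pos_B haa).trans_le (hbb' a haa)) hcpos hA hB)

end IsMaxSolSL2

/-! ### Asymptotics at the final time -/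

variable {T L N : ℝ}

namespace IsSolSL2

lemma tendsto_C_nhdsGT_zero (h : IsSolSL2 A B C (Ico a T)) (haT : a < T)
    (hC : Tendsto C (𝓝[<] T) (𝓝 0)) : Tendsto C (𝓝[<] T) (𝓝[>] 0) :=
  tendsto_nhdsWithin_iff.2 ⟨hC, eventually_of_mem (Ico_mem_nhdsLT haT) fun _ ht => h.pos_C ht⟩

lemma tendsto_div_A_B (h : IsSolSL2 A B C (Ico a T)) (haT : a < T) (hN : N ≠ 0)
    (hAC : Tendsto (fun t => A t * C t) (𝓝[<] T) (𝓝 L))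
    (hBC : Tendsto (fun t => B t * C t) (𝓝[<] T) (𝓝 N)) :
    Tendsto (fun t => A t / B t) (𝓝[<] T) (𝓝 (L / N)) :=
  tendsto_div_of_tendsto_mul_right hN
    (eventually_of_mem (Ico_mem_nhdsLT haT) fun _ ht => (h.pos_C ht).ne') hAC hBC

lemma tendsto_sq_mul_A_C_of_tendsto (h : IsSolSL2 A B C (Ico a T)) (haT : a < T)
    (hw : ∀ t ∈ Ico a T, A t + C t ≤ B t) (hA : Tendsto A (𝓝[<] T) atTop)
    (hC : Tendsto C (𝓝[<] T) (𝓝 0))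
    (hlim : Tendsto (fun t => -(A t * C t) ^ 2 *
      (sl2F1 (A t) (B t) (C t) / sl2F3 (A t) (B t) (C t))) (𝓝[<] T) (𝓝 L)) :
    Tendsto (fun t => (A t * C t) ^ 2) (𝓝[<] T) (𝓝 L) := by
  have hmem := Ico_mem_nhdsLT haT
  have hC2 : Tendsto (fun t => C t ^ 2) (𝓝[<] T) (𝓝 0) := by
    simpa only [ne_eq, two_ne_zero, not_false_eq_true, zero_pow] using hC.pow 2
  have hA2 : Tendsto (fun t => (A t ^ 2)⁻¹) (𝓝[<] T) (𝓝 0) :=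
    tendsto_inv_atTop_zero.comp ((tendsto_pow_atTop two_ne_zero).comp hA)
  have hquot := HasDerivAt.lhopital_zero_nhdsLT
    (eventually_of_mem hmem fun _ ht => h.hasDerivAt_sq_C ht)
    (eventually_of_mem hmem fun _ ht => h.hasDerivAt_inv_sq_A ht) ?_ hC2 hA2 (hlim.congr' ?_)
  · simpa only [div_inv_eq_mul, mul_pow, mul_comm] using hquot
  all_goals
    filter_upwards [hmem] with t ht
    have hA := h.pos_A ht
    have hB := h.pos_B ht
    have hC := h.pos_C ht
    have hF2 := (h.sl2F2_neg ht (hw t ht)).ne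
    have hF3 := (h.sl2F3_pos ht (hw t ht)).ne'
  · positivity
  · field_simp

lemma eq_of_tendsto_mul_C (h : IsSolSL2 A B C (Ico a T)) (haT : a < T)
    (hw : ∀ t ∈ Ico a T, A t + C t ≤ B t) (hC : Tendsto C (𝓝[<] T) (𝓝 0)) (hL : 0 < L)
    (hN : 0 < N) (hAC : Tendsto (fun t => A t * C t) (𝓝[<] T) (𝓝 L))
    (hBC : Tendsto (fun t => B t * C t) (𝓝[<] T) (𝓝 N)) : L = N := by
  have hC' := h.tendsto_C_nhdsGT_zero haT hC
  have hA := tendsto_atTop_of_tendsto_mul_of_tendsto_nhdsGT_zero hL hAC hC'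
  have hB := tendsto_atTop_of_tendsto_mul_of_tendsto_nhdsGT_zero hN hBC hC'
  have hr := h.tendsto_div_A_B haT hN.ne' hAC hBC
  have hq := hC.div_atTop hB
  set r := L / N
  have hrpos : 0 < r := div_pos hL hN
  have hF3 : sl2F3 r 1 0 ≠ 0 := by
    have hsq : sl2F3 r 1 0 = (1 + r) ^ 2 := by unfold sl2F3; ring
    rw [hsq]
    positivity
  have hBne := hB.eventually_ne_atTop 0
  have hF1F3 : Tendsto (fun t => sl2F1 (A t) (B t) (C t) / sl2F3 (A t) (B t) (C t)) (𝓝[<] T)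
      (𝓝 (sl2F1 r 1 0 / sl2F3 r 1 0)) := by
    refine ((tendsto_sl2F1_div_sq hBne hr hq).div (tendsto_sl2F3_div_sq hBne hr hq) hF3).congr' ?_
    filter_upwards [hBne] with t ht
    exact div_div_div_cancel_right₀ (pow_ne_zero 2 ht) _ _
  have hlim := h.tendsto_sq_mul_A_C_of_tendsto haT hw hA hC ((hAC.pow 2).neg.mul hF1F3)
  have hfix : L ^ 2 = -L ^ 2 * (sl2F1 r 1 0 / sl2F3 r 1 0) := tendsto_nhds_unique (hAC.pow 2) hlim
  have hF13 : sl2F1 r 1 0 + sl2F3 r 1 0 = 0 := by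
    field_simp at hfix
    linarith
  rw [sl2F1_add_sl2F3] at hF13
  have hr1 : r = 1 := by
    rcases mul_eq_zero.1 hF13 with h1 | h1 <;> linarith
  exact (div_eq_one_iff_eq hN.ne').1 hr1

lemma tendsto_sq_C_div (h : IsSolSL2 A B C (Ico a T)) (haT : a < T)
    (hB : Tendsto B (𝓝[<] T) atTop) (hC : Tendsto C (𝓝[<] T) (𝓝 0))
    (hAB : Tendsto (fun t => A t / B t) (𝓝[<] T) (𝓝 1)) :
    Tendsto (fun t => C t ^ 2 / (T - t)) (𝓝[<] T) (𝓝 64) := by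
  have hmem := Ico_mem_nhdsLT haT
  have hBne := hB.eventually_ne_atTop 0
  have hq := hC.div_atTop hB
  have hrate : Tendsto (fun t => -4 * (sl2F1 (A t) (B t) (C t) / B t ^ 2) *
      (sl2F2 (A t) (B t) (C t) / B t ^ 2) / (A t / B t) ^ 2) (𝓝[<] T) (𝓝 (-64)) := by
    have hval : -4 * sl2F1 1 1 0 * sl2F2 1 1 0 / 1 ^ 2 = -64 := by norm_num [sl2F1, sl2F2]
    rw [← hval]
    exact (((tendsto_sl2F1_div_sq hBne hAB hq).const_mul (-4)).mul
      (tendsto_sl2F2_div_sq hBne hAB hq)).div (hAB.pow 2) (by norm_num)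
  have hderiv : Tendsto (fun t => -4 * sl2F1 (A t) (B t) (C t) * sl2F2 (A t) (B t) (C t) /
      (A t * B t) ^ 2 / -1) (𝓝[<] T) (𝓝 64) := by
    convert (hrate.congr' ?_).div_const (-1) using 2
    · norm_num
    · filter_upwards [hmem] with t ht
      have hA := h.pos_A ht
      have hB := h.pos_B ht
      field_simp
  refine HasDerivAt.lhopital_zero_nhdsLT (eventually_of_mem hmem fun _ ht => h.hasDerivAt_sq_C ht)
    (.of_forall fun t => (hasDerivAt_id t).const_sub T) (.of_forall fun _ => by norm_num) ?_ ?_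
    hderiv
  · simpa only [ne_eq, two_ne_zero, not_false_eq_true, zero_pow] using hC.pow 2
  · exact ((continuous_const.sub continuous_id).tendsto' T 0 (sub_self T)).mono_left
      nhdsWithin_le_nhds

lemma tendsto_C_div_sqrt (h : IsSolSL2 A B C (Ico a T)) (haT : a < T)
    (hB : Tendsto B (𝓝[<] T) atTop) (hC : Tendsto C (𝓝[<] T) (𝓝 0))
    (hAB : Tendsto (fun t => A t / B t) (𝓝[<] T) (𝓝 1)) :
    Tendsto (fun t => C t / √(T - t)) (𝓝[<] T) (𝓝 8) := by
  have hsqrt : √(64 : ℝ) = 8 := by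
    rw [show (64 : ℝ) = 8 ^ 2 by norm_num, Real.sqrt_sq (by norm_num)]
  rw [← hsqrt]
  refine (h.tendsto_sq_C_div haT hB hC hAB).sqrt.congr' ?_
  filter_upwards [Ico_mem_nhdsLT haT] with t ht
  rw [Real.sqrt_div (sq_nonneg _), Real.sqrt_sq (h.pos_C ht).le]

end IsSolSL2

namespace IsTrappedSL2

lemma exists_tendsto_mul (h : IsTrappedSL2 A B C (Ico a T)) (haT : a < T)
    (hC : Tendsto C (𝓝[<] T) (𝓝 0)) :
    ∃ L > 0, Tendsto (fun t => A t * C t) (𝓝[<] T) (𝓝 L) ∧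
      Tendsto (fun t => B t * C t) (𝓝[<] T) (𝓝 L) := by
  have hsol := h.isSol
  have haa : a ∈ Ico a T := left_mem_Ico.2 haT
  obtain ⟨L, hAC, hACL⟩ := exists_tendsto_nhdsLT_of_monotoneOn_Ico haT
    (hsol.monotoneOn_mul_A_C h.add_le)
    ⟨B a * C a, forall_mem_image.2 fun t ht => h.mul_A_C_le (isLeast_Ico haT) ht⟩
  obtain ⟨N, hBC, -⟩ := exists_tendsto_nhdsLT_of_antitoneOn_Ico haT h.antitoneOn_mul_B_C
    ⟨0, forall_mem_image.2 fun t ht => (mul_pos (hsol.pos_B ht) (hsol.pos_C ht)).le⟩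
  have hL : 0 < L := (mul_pos (hsol.pos_A haa) (hsol.pos_C haa)).trans_le (hACL a haa)
  have hLN : L ≤ N := by
    refine le_of_tendsto_of_tendsto hAC hBC (eventually_of_mem (Ico_mem_nhdsLT haT) fun t ht => ?_)
    have hCt := hsol.pos_C ht
    exact mul_le_mul_of_nonneg_right (by linarith [h.add_le t ht]) hCt.le
  obtain rfl := hsol.eq_of_tendsto_mul_C haT h.add_le hC hL (hL.trans_le hLN) hAC hBC
  exact ⟨L, hL, hAC, hBC⟩

end IsTrappedSL2

theorem sl2_blowup_special_case_general {T : EReal} (hT : 0 < T) (hmax : IsMaxSolSL2 A B C T)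
    (hw0 : A 0 + C 0 ≤ B 0) :
    ∃ T0 : ℝ, 0 < T0 ∧ T = T0 ∧
      Tendsto (fun t => C t / (8 * √(T0 - t))) (𝓝[<] T0) (𝓝 1) ∧
      (∃ E : ℝ, 0 < E ∧ Tendsto (fun t => A t * √(T0 - t) / E) (𝓝[<] T0) (𝓝 1) ∧
        Tendsto (fun t => B t * √(T0 - t) / E) (𝓝[<] T0) (𝓝 1)) ∧
      Tendsto A (𝓝[<] T0) atTop ∧ Tendsto B (𝓝[<] T0) atTop ∧ Tendsto C (𝓝[<] T0) (𝓝 0) ∧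
      Tendsto (fun t => A t / B t) (𝓝[<] T0) (𝓝 1) := by
  obtain ⟨T0, hT0, rfl⟩ := hmax.exists_eq_coe hT hw0
  obtain ⟨a, haT, ha0, htrap⟩ := hmax.exists_isTrappedSL2 hT0 hw0
  have hsol := htrap.isSol
  have hC := hmax.tendsto_C_zero ha0 haT htrap
  obtain ⟨L, hL, hAC, hBC⟩ := htrap.exists_tendsto_mul haT hC
  have hC' := hsol.tendsto_C_nhdsGT_zero haT hC
  have hA := tendsto_atTop_of_tendsto_mul_of_tendsto_nhdsGT_zero hL hAC hC'
  have hB := tendsto_atTop_of_tendsto_mul_of_tendsto_nhdsGT_zero hL hBC hC'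
  have hAB : Tendsto (fun t => A t / B t) (𝓝[<] T0) (𝓝 1) :=
    div_self hL.ne' ▸ hsol.tendsto_div_A_B haT hL.ne' hAC hBC
  have hC8 := hsol.tendsto_C_div_sqrt haT hB hC hAB
  have hrate {f : ℝ → ℝ} (hf : Tendsto (fun t => f t * C t) (𝓝[<] T0) (𝓝 L)) :
      Tendsto (fun t => f t * √(T0 - t) / (L / 8)) (𝓝[<] T0) (𝓝 1) := by
    have hlim := tendsto_mul_of_tendsto_mul_of_tendsto_div (by norm_num)
      (eventually_of_mem (Ico_mem_nhdsLT haT) fun _ ht => (hsol.pos_C ht).ne') hf hC8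
    exact div_self (ne_of_gt (by positivity : 0 < L / 8)) ▸ hlim.div_const (L / 8)
  refine ⟨T0, hT0, rfl, ?_, ⟨L / 8, by positivity, hrate hAC, hrate hBC⟩, hA, hB, hC, hAB⟩
  simpa only [div_div, mul_comm, div_self, ne_eq, OfNat.ofNat_ne_zero, not_false_eq_true]
    using hC8.div_const 8

/-- For a maximal positive solution of the `SL(2,ℝ)` negative cross curvature flow with
`B0 > C0 > 0`, `A0 > 0`, `F1(0) < 0`, `F2(0) < 0` and `A0 + C0 ≤ B0`: the solution blows
up at a finite time `T0 > 0`, and as `t → T0⁻` one has `C ∼ 8√(T0 - t)`,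
`A, B ∼ E/√(T0 - t)` for some constant `E > 0`; in particular `A, B → ∞`, `C → 0` and
`A/B → 1`. -/
theorem sl2_blowup_special_case
    (A0 B0 C0 : ℝ) (hA0 : 0 < A0) (hC0 : 0 < C0) (hB0C0 : B0 > C0)
    (hACB : A0 + C0 ≤ B0)
    (A B C : ℝ → ℝ) (T : EReal) (hT : 0 < T)
    (hmax : IsMaxSolSL2 A B C T)
    (hinitA : A 0 = A0) (hinitB : B 0 = B0) (hinitC : C 0 = C0)
    (hF1_0 : sl2F1 A0 B0 C0 < 0) (hF2_0 : sl2F2 A0 B0 C0 < 0) :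
    ∃ T0 : ℝ, 0 < T0 ∧ T = (T0 : EReal) ∧
      Filter.Tendsto (fun t => C t / (8 * Real.sqrt (T0 - t)))
        (nhdsWithin T0 (Set.Iio T0)) (nhds 1) ∧
      (∃ E : ℝ, 0 < E ∧
        Filter.Tendsto (fun t => A t * Real.sqrt (T0 - t) / E)
          (nhdsWithin T0 (Set.Iio T0)) (nhds 1) ∧
        Filter.Tendsto (fun t => B t * Real.sqrt (T0 - t) / E)
          (nhdsWithin T0 (Set.Iio T0)) (nhds 1)) ∧
      Filter.Tendsto A (nhdsWithin T0 (Set.Iio T0)) Filter.atTop ∧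
      Filter.Tendsto B (nhdsWithin T0 (Set.Iio T0)) Filter.atTop ∧
      Filter.Tendsto C (nhdsWithin T0 (Set.Iio T0)) (nhds 0) ∧
      Filter.Tendsto (fun t => A t / B t) (nhdsWithin T0 (Set.Iio T0)) (nhds 1) := by
  subst hinitA hinitB hinitC
  exact sl2_blowup_special_case_general hT hmax hACB
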